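/- Let H be a separable infinite-dimensional complex Hilbert space and let L be an infinite-dimensional (as a complex vector space) Lie subalgebra of B(H) consisting of compact operators. If there exists T ∈ L such that the principal two-sided ideal (T) generated by T is not soft-edged, i.e. (T) ≠ (T)·K(H), then L is not simple: there exists a Lie ideal J of L with J ≠ {0} and J ≠ L. -/

import Mathlib

/-- The two-sided ideal of compact operators on `H`. -/
noncomputable def compactIdeal (H : Type*) [NormedAddCommGroup H]
    [InnerProductSpace ℂ H] : TwoSidedIdeal (H →L[ℂ] H) :=
  TwoSidedIdeal.mk' {T : H →L[ℂ] H | IsCompactOperator (T : H → H)}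
    isCompactOperator_zero
    (fun hx hy => hx.add hy)
    (fun hx => hx.neg)
    (fun {x y} hy => by simpa [Function.comp] using hy.clm_comp x)
    (fun {x y} hx => by simpa [Function.comp] using hx.comp_clm y)

/-- The product `I·J` of two two-sided ideals: the two-sided ideal whose elements are the
finite sums of products `XY` with `X ∈ I` and `Y ∈ J`. -/
noncomputable def idealMul {R : Type*} [Ring R] (I J : TwoSidedIdeal R) : TwoSidedIdeal R :=
  TwoSidedIdeal.span {x : R | ∃ a ∈ I, ∃ b ∈ J, x = a * b}

/-!
Let `K` be a two-sided ideal of `B(H)` containing `L`, such as the compact operators. Every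
two-sided ideal of `B(H)` is self-adjoint: by the polar decomposition, `star T` is a product
containing `T` as a factor. Taking adjoints of products then gives `(T)·K = K·(T)`, so
`A * T - T * A` lies in `(T)·K` for all `A ∈ L`, although `T` itself does not. Hence `L ∩ (T)·K` is
a Lie ideal of `L` missing `T`; if it vanishes, then `T` is central in `L` and the line spanned by
`T` is the required Lie ideal.
-/

section IdealMul

variable {R : Type*} [Ring R] {I J : TwoSidedIdeal R} {a b : R}

theorem mul_mem_idealMul (ha : a ∈ I) (hb : b ∈ J) : a * b ∈ idealMul I J :=
  TwoSidedIdeal.subset_span ⟨a, ha, b, hb, rfl⟩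

theorem idealMul_le {M : TwoSidedIdeal R} :
    idealMul I J ≤ M ↔ ∀ a ∈ I, ∀ b ∈ J, a * b ∈ M := by
  refine ⟨fun h a ha b hb ↦ h (mul_mem_idealMul ha hb), fun h ↦ TwoSidedIdeal.span_le.2 ?_⟩
  rintro _ ⟨a, ha, b, hb, rfl⟩
  exact h a ha b hb

theorem span_singleton_eq_idealMul_of_mem (ha : a ∈ idealMul (TwoSidedIdeal.span {a}) J) :
    TwoSidedIdeal.span {a} = idealMul (TwoSidedIdeal.span {a}) J :=
  le_antisymm (TwoSidedIdeal.span_le.2 (Set.singleton_subset_iff.2 ha))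
    (idealMul_le.2 fun _ hx y _ ↦ TwoSidedIdeal.mul_mem_right _ _ y hx)

theorem idealMul_comm_of_star_mem [StarRing R]
    (hstar : ∀ (M : TwoSidedIdeal R), ∀ x ∈ M, star x ∈ M) (I J : TwoSidedIdeal R) :
    idealMul I J = idealMul J I := by
  have hle (I J : TwoSidedIdeal R) : idealMul I J ≤ idealMul J I := idealMul_le.2 fun a ha b hb ↦ by
    have hmem : star b * star a ∈ idealMul J I := mul_mem_idealMul (hstar J b hb) (hstar I a ha)
    simpa only [star_mul, star_star] using hstar _ _ hmem
  exact le_antisymm (hle I J) (hle J I)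

end IdealMul

theorem exists_nontrivial_lieIdeal_of_commutator_mem {k R : Type*} [Field k] [Ring R] [Algebra k R]
    (L : Submodule k R) (hLie : ∀ a ∈ L, ∀ b ∈ L, a * b - b * a ∈ L)
    (hdim : Module.finrank k L ≠ 1) (I : TwoSidedIdeal R) {t : R} (htL : t ∈ L) (htI : t ∉ I)
    (hcomm : ∀ a ∈ L, a * t - t * a ∈ I) :
    ∃ J : Submodule k R,
      J ≤ L ∧ (∀ a ∈ L, ∀ b ∈ J, a * b - b * a ∈ J) ∧ J ≠ ⊥ ∧ J ≠ L := by
  set J : Submodule k R := L ⊓ I.asIdeal.restrictScalars k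
  by_cases hJ : J = ⊥
  · have hcentral : ∀ a ∈ L, a * t - t * a = 0 := fun a ha ↦ by
      have hmem : a * t - t * a ∈ J := ⟨hLie a ha t htL, hcomm a ha⟩
      rwa [hJ, Submodule.mem_bot] at hmem
    have ht : t ≠ 0 := fun h ↦ htI (h ▸ I.zero_mem)
    refine ⟨k ∙ t, (Submodule.span_singleton_le_iff_mem t L).2 htL, fun a ha b hb ↦ ?_,
      mt Submodule.span_singleton_eq_bot.1 ht, fun h ↦ hdim (h ▸ finrank_span_singleton ht)⟩
    obtain ⟨c, rfl⟩ := Submodule.mem_span_singleton.1 hb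
    rw [mul_smul_comm, smul_mul_assoc, ← smul_sub, hcentral a ha, smul_zero]
    exact Submodule.zero_mem _
  · exact ⟨J, inf_le_left, fun a ha b hb ↦ ⟨hLie a ha b hb.1,
      I.sub_mem (I.mul_mem_left a b hb.2) (I.mul_mem_right b a hb.2)⟩, hJ,
      fun h ↦ htI (inf_eq_left.1 h htL)⟩

theorem exists_continuousLinearMap_comp_eq_of_norm_le {𝕜 E F G : Type*} [RCLike 𝕜]
    [AddCommGroup E] [Module 𝕜 E] [NormedAddCommGroup F] [InnerProductSpace 𝕜 F] [CompleteSpace F]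
    [NormedAddCommGroup G] [NormedSpace 𝕜 G] [CompleteSpace G]
    (S : E →ₗ[𝕜] F) (T : E →ₗ[𝕜] G) {C : ℝ} (h : ∀ x, ‖T x‖ ≤ C * ‖S x‖) :
    ∃ W : F →L[𝕜] G, ∀ x, W (S x) = T x := by
  let V := (LinearMap.range S).topologicalClosure
  have hSV (x : E) : S x ∈ V := Submodule.le_topologicalClosure _ ⟨x, rfl⟩
  have : CompleteSpace V := (Submodule.isClosed_topologicalClosure _).completeSpace_coe
  let e : E →ₗ[𝕜] V := S.codRestrict V hSV
  have he : DenseRange e := ((denseRange_inclusion_iff subset_closure).2 subset_rfl).comp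
    S.surjective_rangeRestrict.denseRange
    (continuous_inclusion (Submodule.le_topologicalClosure _))
  refine ⟨T.extendOfNorm e ∘L V.orthogonalProjectionOnto, fun x ↦ ?_⟩
  have hproj : V.orthogonalProjectionOnto (S x) = e x :=
    Submodule.orthogonalProjectionOnto_mem_subspace_eq_self (e x)
  rw [ContinuousLinearMap.comp_apply, hproj, LinearMap.extendOfNorm_eq he ⟨C, h⟩]

section Operators

variable {H : Type*} [NormedAddCommGroup H] [InnerProductSpace ℂ H] [CompleteSpace H]

theorem exists_mul_eq_of_star_mul_self_eq {S T : H →L[ℂ] H} (h : star S * S = star T * T) :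
    ∃ W : H →L[ℂ] H, W * S = T := by
  have hnorm (x : H) : ‖T x‖ = ‖S x‖ := by
    rw [T.apply_norm_eq_sqrt_inner_adjoint_left, S.apply_norm_eq_sqrt_inner_adjoint_left]
    exact congrArg (fun A : H →L[ℂ] H ↦ √(RCLike.re (inner ℂ (A x) x))) h.symm
  obtain ⟨W, hW⟩ := exists_continuousLinearMap_comp_eq_of_norm_le (C := 1) (S : H →ₗ[ℂ] H)
    (T : H →ₗ[ℂ] H) fun x ↦ by rw [one_mul]; exact (hnorm x).le
  exact ⟨W, ContinuousLinearMap.ext hW⟩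

theorem star_mem_of_mem_twoSidedIdeal (I : TwoSidedIdeal (H →L[ℂ] H)) (T : H →L[ℂ] H) (hT : T ∈ I) :
    star T ∈ I := by
  have habs : star (CFC.abs T) = CFC.abs T := (CFC.abs_nonneg T).isSelfAdjoint.star_eq
  have hsq : star (CFC.abs T) * CFC.abs T = star T * T := by rw [habs, CFC.abs_mul_abs]
  obtain ⟨U, hU⟩ := exists_mul_eq_of_star_mul_self_eq hsq
  obtain ⟨V, hV⟩ := exists_mul_eq_of_star_mul_self_eq hsq.symm
  have hstar : star T = V * T * star U := by
    rw [hV]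
    simpa only [star_mul, habs] using (congrArg star hU).symm
  rw [hstar]
  exact I.mul_mem_right _ _ (I.mul_mem_left _ _ hT)

theorem stmt0_general (K : TwoSidedIdeal (H →L[ℂ] H)) (L : Submodule ℂ (H →L[ℂ] H))
    (hLie : ∀ A ∈ L, ∀ B ∈ L, A * B - B * A ∈ L) (hLK : ∀ A ∈ L, A ∈ K)
    (hdim : Module.finrank ℂ L ≠ 1) (T : H →L[ℂ] H) (hTL : T ∈ L)
    (hT : TwoSidedIdeal.span {T} ≠ idealMul (TwoSidedIdeal.span {T}) K) :
    ∃ J : Submodule ℂ (H →L[ℂ] H),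
      J ≤ L ∧ (∀ A ∈ L, ∀ B ∈ J, A * B - B * A ∈ J) ∧ J ≠ ⊥ ∧ J ≠ L := by
  have hTspan : T ∈ TwoSidedIdeal.span {T} := TwoSidedIdeal.subset_span rfl
  refine exists_nontrivial_lieIdeal_of_commutator_mem L hLie hdim
    (idealMul (TwoSidedIdeal.span {T}) K) hTL (mt span_singleton_eq_idealMul_of_mem hT)
    fun A hA ↦ TwoSidedIdeal.sub_mem _ ?_ ?_
  · rw [idealMul_comm_of_star_mem star_mem_of_mem_twoSidedIdeal]
    exact mul_mem_idealMul (hLK A hA) hTspan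
  · exact mul_mem_idealMul hTspan (hLK A hA)

end Operators

/-- **Theorem (main result).** Let `H` be a separable infinite-dimensional complex Hilbert
space and `L` an infinite-dimensional Lie subalgebra of `B(H)` consisting of compact
operators.  If some `T ∈ L` generates a principal two-sided ideal `(T)` which is not
soft-edged (i.e. `(T) ≠ (T)·K(H)`), then `L` is not simple: there is a Lie ideal `J` of `L`
with `J ≠ {0}` and `J ≠ L`. -/
theorem stmt0 {H : Type*} [NormedAddCommGroup H] [InnerProductSpace ℂ H]
    [CompleteSpace H] [TopologicalSpace.SeparableSpace H]
    (hHinf : ¬ FiniteDimensional ℂ H)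
    (L : Submodule ℂ (H →L[ℂ] H))
    (hLie : ∀ A ∈ L, ∀ B ∈ L, A * B - B * A ∈ L)
    (hLcompact : ∀ T ∈ L, IsCompactOperator (T : H → H))
    (hLinf : ¬ FiniteDimensional ℂ ↥L)
    (T : H →L[ℂ] H) (hTL : T ∈ L)
    (hTnotsoft :
      TwoSidedIdeal.span {T} ≠ idealMul (TwoSidedIdeal.span {T}) (compactIdeal H)) :
    ∃ J : Submodule ℂ (H →L[ℂ] H),
      J ≤ L ∧ (∀ A ∈ L, ∀ B ∈ J, A * B - B * A ∈ J) ∧ J ≠ ⊥ ∧ J ≠ L := by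
  have hLK : ∀ A ∈ L, A ∈ compactIdeal H := fun A hA ↦
    (TwoSidedIdeal.mem_mk' _ _ _ _ _ _ A).2 (hLcompact A hA)
  have hdim : Module.finrank ℂ L ≠ 1 := fun h ↦ hLinf (Module.finite_of_finrank_eq_succ h)
  exact stmt0_general (compactIdeal H) L hLie hLK hdim T hTL hTnotsoft
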